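/- Type-and-coeffect preservation of the CBV translation of the graded λ-calculus: if γ·Γ ⊢ e : τ in the graded source λ-calculus, then γ·⟦Γ⟧v ⊢ ⟦e⟧v : F_1 ⟦τ⟧v in CBPV with coeffects (with the same grade vector γ). -/

import Mathlib

set_option autoImplicit false

/-- A preordered semiring of grades `(Q, +, 0, ·, 1, ≤co)`,
where `≤co` is a preorder respected by `+` and `·`. -/
structure CoSig (Q : Type) where
  add : Q → Q → Q
  zero : Q
  mul : Q → Q → Q
  one : Q
  le : Q → Q → Prop
  add_assoc : ∀ a b c, add (add a b) c = add a (add b c)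
  add_comm : ∀ a b, add a b = add b a
  add_zero : ∀ a, add a zero = a
  mul_assoc : ∀ a b c, mul (mul a b) c = mul a (mul b c)
  one_mul : ∀ a, mul one a = a
  mul_one : ∀ a, mul a one = a
  zero_mul : ∀ a, mul zero a = zero
  mul_zero : ∀ a, mul a zero = zero
  left_distrib : ∀ a b c, mul a (add b c) = add (mul a b) (mul a c)
  right_distrib : ∀ a b c, mul (add a b) c = add (mul a c) (mul b c)
  le_refl : ∀ a, le a a
  le_trans : ∀ a b c, le a b → le b c → le a c
  add_le_add : ∀ a b c d, le a b → le c d → le (add a c) (add b d)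
  mul_le_mul : ∀ a b c d, le a b → le c d → le (mul a c) (mul b d)

namespace CBPVCo

/-- Pointwise comparison of grade vectors: `γ₁ ≤co γ₂`. -/
def vle {Q : Type} (S : CoSig Q) (γ₁ γ₂ : List Q) : Prop := List.Forall₂ S.le γ₁ γ₂

/-- Pointwise addition of grade vectors. -/
def vadd {Q : Type} (S : CoSig Q) (γ₁ γ₂ : List Q) : List Q := List.zipWith S.add γ₁ γ₂

/-- Pointwise scaling of a grade vector: `q·γ`. -/
def vscale {Q : Type} (S : CoSig Q) (q : Q) (γ : List Q) : List Q := γ.map (S.mul q)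

/-- `γ ≤co 0̄`: every entry of the grade vector is discardable. -/
def leZero {Q : Type} (S : CoSig Q) (γ : List Q) : Prop := ∀ q ∈ γ, S.le q S.zero

mutual
/-- CBPV value types (coeffect version): `unit`, thunks `U B`, positive products, sums. -/
inductive VTy (Q : Type) : Type where
  | unit : VTy Q
  | thunk : CTy Q → VTy Q
  | prod : VTy Q → VTy Q → VTy Q
  | sum : VTy Q → VTy Q → VTy Q
/-- CBPV computation types (coeffect version): graded functions `A^q → B`,
graded returners `F_q A`, negative products. -/
inductive CTy (Q : Type) : Type where
  | arr : VTy Q → Q → CTy Q → CTy Q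
  | F : Q → VTy Q → CTy Q
  | wth : CTy Q → CTy Q → CTy Q
end

mutual
/-- CBPV values (de Bruijn indices for variables). -/
inductive Val (Q : Type) : Type where
  | var : Nat → Val Q
  | unit : Val Q
  | thunk : Comp Q → Val Q
  | pair : Val Q → Val Q → Val Q
  | inl : Val Q → Val Q
  | inr : Val Q → Val Q
/-- CBPV computations, with grade annotations on binders and on `return`. -/
inductive Comp (Q : Type) : Type where
  | lam : Q → Comp Q → Comp Q
  | app : Comp Q → Val Q → Comp Q
  | force : Val Q → Comp Q
  | split : Q → Val Q → Comp Q → Comp Q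
  | cpair : Comp Q → Comp Q → Comp Q
  | fst : Comp Q → Comp Q
  | snd : Comp Q → Comp Q
  | ret : Q → Val Q → Comp Q
  | letin : Q → Comp Q → Comp Q → Comp Q
  | seq : Val Q → Comp Q → Comp Q
  | case : Q → Val Q → Comp Q → Comp Q → Comp Q
end

mutual
/-- The value typing judgment `γ·Γ ⊢ V : A` of the CBPV type-and-coeffect system. -/
inductive VHasTy {Q : Type} (S : CoSig Q) : List Q → List (VTy Q) → Val Q → VTy Q → Prop where
  | var : ∀ {γ : List Q} {Γ : List (VTy Q)} {x : Nat} {q : Q} {A : VTy Q},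
      γ.length = Γ.length → Γ[x]? = some A → γ[x]? = some q → S.le q S.one →
      (∀ (i : Nat) (q' : Q), i ≠ x → γ[i]? = some q' → S.le q' S.zero) →
      VHasTy S γ Γ (.var x) A
  | unit : ∀ {γ : List Q} {Γ : List (VTy Q)},
      γ.length = Γ.length → leZero S γ → VHasTy S γ Γ .unit .unit
  | thunk : ∀ {γ : List Q} {Γ : List (VTy Q)} {M : Comp Q} {B : CTy Q},
      CHasTy S γ Γ M B → VHasTy S γ Γ (.thunk M) (.thunk B)
  | pair : ∀ {γ γ₁ γ₂ : List Q} {Γ : List (VTy Q)} {V₁ V₂ : Val Q} {A₁ A₂ : VTy Q},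
      VHasTy S γ₁ Γ V₁ A₁ → VHasTy S γ₂ Γ V₂ A₂ → vle S γ (vadd S γ₁ γ₂) →
      VHasTy S γ Γ (.pair V₁ V₂) (.prod A₁ A₂)
  | inl : ∀ {γ : List Q} {Γ : List (VTy Q)} {V : Val Q} {A₁ A₂ : VTy Q},
      VHasTy S γ Γ V A₁ → VHasTy S γ Γ (.inl V) (.sum A₁ A₂)
  | inr : ∀ {γ : List Q} {Γ : List (VTy Q)} {V : Val Q} {A₁ A₂ : VTy Q},
      VHasTy S γ Γ V A₂ → VHasTy S γ Γ (.inr V) (.sum A₁ A₂)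

/-- The computation typing judgment `γ·Γ ⊢ M : B` of the CBPV type-and-coeffect system. -/
inductive CHasTy {Q : Type} (S : CoSig Q) : List Q → List (VTy Q) → Comp Q → CTy Q → Prop where
  | lam : ∀ {γ : List Q} {Γ : List (VTy Q)} {q : Q} {A : VTy Q} {M : Comp Q} {B : CTy Q},
      CHasTy S (q :: γ) (A :: Γ) M B → CHasTy S γ Γ (.lam q M) (.arr A q B)
  | app : ∀ {γ γ₁ γ₂ : List Q} {Γ : List (VTy Q)} {M : Comp Q} {V : Val Q}
      {A : VTy Q} {q : Q} {B : CTy Q},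
      CHasTy S γ₁ Γ M (.arr A q B) → VHasTy S γ₂ Γ V A →
      vle S γ (vadd S γ₁ (vscale S q γ₂)) → CHasTy S γ Γ (.app M V) B
  | force : ∀ {γ : List Q} {Γ : List (VTy Q)} {V : Val Q} {B : CTy Q},
      VHasTy S γ Γ V (.thunk B) → CHasTy S γ Γ (.force V) B
  | ret : ∀ {γ γ₁ : List Q} {Γ : List (VTy Q)} {q : Q} {V : Val Q} {A : VTy Q},
      VHasTy S γ₁ Γ V A → vle S γ (vscale S q γ₁) → CHasTy S γ Γ (.ret q V) (.F q A)
  | letin : ∀ {γ γ₁ γ₂ : List Q} {Γ : List (VTy Q)} {q₁ q₂ : Q} {M N : Comp Q}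
      {A : VTy Q} {B : CTy Q},
      CHasTy S γ₁ Γ M (.F q₁ A) → CHasTy S (S.mul q₁ q₂ :: γ₂) (A :: Γ) N B →
      vle S γ (vadd S (vscale S q₂ γ₁) γ₂) → CHasTy S γ Γ (.letin q₂ M N) B
  | split : ∀ {γ γ₁ γ₂ : List Q} {Γ : List (VTy Q)} {q : Q} {V : Val Q}
      {A₁ A₂ : VTy Q} {N : Comp Q} {B : CTy Q},
      VHasTy S γ₁ Γ V (.prod A₁ A₂) → CHasTy S (q :: q :: γ₂) (A₂ :: A₁ :: Γ) N B →
      vle S γ (vadd S (vscale S q γ₁) γ₂) → CHasTy S γ Γ (.split q V N) B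
  | cpair : ∀ {γ : List Q} {Γ : List (VTy Q)} {M₁ M₂ : Comp Q} {B₁ B₂ : CTy Q},
      CHasTy S γ Γ M₁ B₁ → CHasTy S γ Γ M₂ B₂ → CHasTy S γ Γ (.cpair M₁ M₂) (.wth B₁ B₂)
  | fst : ∀ {γ : List Q} {Γ : List (VTy Q)} {M : Comp Q} {B₁ B₂ : CTy Q},
      CHasTy S γ Γ M (.wth B₁ B₂) → CHasTy S γ Γ (.fst M) B₁
  | snd : ∀ {γ : List Q} {Γ : List (VTy Q)} {M : Comp Q} {B₁ B₂ : CTy Q},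
      CHasTy S γ Γ M (.wth B₁ B₂) → CHasTy S γ Γ (.snd M) B₂
  | seq : ∀ {γ γ₁ γ₂ : List Q} {Γ : List (VTy Q)} {V : Val Q} {M : Comp Q} {B : CTy Q},
      VHasTy S γ₁ Γ V .unit → CHasTy S γ₂ Γ M B → vle S γ (vadd S γ₁ γ₂) →
      CHasTy S γ Γ (.seq V M) B
  | case : ∀ {γ γ₁ γ₂ : List Q} {Γ : List (VTy Q)} {q : Q} {V : Val Q}
      {A₁ A₂ : VTy Q} {M₁ M₂ : Comp Q} {B : CTy Q},
      VHasTy S γ₁ Γ V (.sum A₁ A₂) → CHasTy S (q :: γ₂) (A₁ :: Γ) M₁ B →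
      CHasTy S (q :: γ₂) (A₂ :: Γ) M₂ B → S.le q S.one →
      vle S γ (vadd S (vscale S q γ₁) γ₂) → CHasTy S γ Γ (.case q V M₁ M₂) B
end

/-- Lifting a de Bruijn renaming under one binder. -/
def liftRen (f : Nat → Nat) : Nat → Nat
  | 0 => 0
  | n + 1 => f n + 1

mutual
/-- Renaming of values. -/
def Val.rename {Q : Type} : Val Q → (Nat → Nat) → Val Q
  | .var x, f => .var (f x)
  | .unit, _ => .unit
  | .thunk M, f => .thunk (M.rename f)
  | .pair V₁ V₂, f => .pair (V₁.rename f) (V₂.rename f)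
  | .inl V, f => .inl (V.rename f)
  | .inr V, f => .inr (V.rename f)
/-- Renaming of computations. -/
def Comp.rename {Q : Type} : Comp Q → (Nat → Nat) → Comp Q
  | .lam q M, f => .lam q (M.rename (liftRen f))
  | .app M V, f => .app (M.rename f) (V.rename f)
  | .force V, f => .force (V.rename f)
  | .split q V N, f => .split q (V.rename f) (N.rename (liftRen (liftRen f)))
  | .cpair M₁ M₂, f => .cpair (M₁.rename f) (M₂.rename f)
  | .fst M, f => .fst (M.rename f)
  | .snd M, f => .snd (M.rename f)
  | .ret q V, f => .ret q (V.rename f)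
  | .letin q M N, f => .letin q (M.rename f) (N.rename (liftRen f))
  | .seq V M, f => .seq (V.rename f) (M.rename f)
  | .case q V M₁ M₂, f => .case q (V.rename f) (M₁.rename (liftRen f)) (M₂.rename (liftRen f))
end

/-- Weakening: shift all free variables up by one. -/
def shift {Q : Type} (M : Comp Q) : Comp Q := M.rename Nat.succ

/-- Weakening under one binder. -/
def shift1 {Q : Type} (M : Comp Q) : Comp Q := M.rename (liftRen Nat.succ)

/-- Weakening under two binders. -/
def shift2 {Q : Type} (M : Comp Q) : Comp Q := M.rename (liftRen (liftRen Nat.succ))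

end CBPVCo

namespace LamCo

/-- Types of the graded source λ-calculus (CBV version, with `⊗`-products):
graded functions, tensor products, sums and the graded modal type `□_q τ`. -/
inductive STy (Q : Type) : Type where
  | unit : STy Q
  | arr : STy Q → Q → STy Q → STy Q
  | tensor : STy Q → STy Q → STy Q
  | sum : STy Q → STy Q → STy Q
  | box : Q → STy Q → STy Q

/-- Terms of the graded source λ-calculus (de Bruijn indices); application
carries the grade of the function type it eliminates. -/
inductive STm (Q : Type) : Type where
  | var : Nat → STm Q
  | lam : Q → STm Q → STm Q
  | app : Q → STm Q → STm Q → STm Q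
  | unit : STm Q
  | seq : STm Q → STm Q → STm Q
  | pair : STm Q → STm Q → STm Q
  | split : Q → STm Q → STm Q → STm Q
  | inl : STm Q → STm Q
  | inr : STm Q → STm Q
  | case : Q → STm Q → STm Q → STm Q → STm Q
  | box : Q → STm Q → STm Q
  | unbox : Q → STm Q → STm Q → STm Q

open CBPVCo in
/-- The type-and-coeffect judgment `γ·Γ ⊢ e : τ` of the graded source λ-calculus. -/
inductive HasTy {Q : Type} (S : CoSig Q) : List Q → List (STy Q) → STm Q → STy Q → Prop where
  | var : ∀ {γ : List Q} {Γ : List (STy Q)} {x : Nat} {q : Q} {τ : STy Q},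
      γ.length = Γ.length → Γ[x]? = some τ → γ[x]? = some q → S.le q S.one →
      (∀ (i : Nat) (q' : Q), i ≠ x → γ[i]? = some q' → S.le q' S.zero) →
      HasTy S γ Γ (.var x) τ
  | lam : ∀ {γ : List Q} {Γ : List (STy Q)} {q : Q} {e : STm Q} {τ₁ τ₂ : STy Q},
      HasTy S (q :: γ) (τ₁ :: Γ) e τ₂ → HasTy S γ Γ (.lam q e) (.arr τ₁ q τ₂)
  | app : ∀ {γ γ₁ γ₂ : List Q} {Γ : List (STy Q)} {e₁ e₂ : STm Q} {τ₁ τ₂ : STy Q} {q : Q},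
      HasTy S γ₁ Γ e₁ (.arr τ₁ q τ₂) → HasTy S γ₂ Γ e₂ τ₁ →
      vle S γ (vadd S γ₁ (vscale S q γ₂)) → HasTy S γ Γ (.app q e₁ e₂) τ₂
  | unit : ∀ {γ : List Q} {Γ : List (STy Q)},
      γ.length = Γ.length → leZero S γ → HasTy S γ Γ .unit .unit
  | seq : ∀ {γ γ₁ γ₂ : List Q} {Γ : List (STy Q)} {e₁ e₂ : STm Q} {τ : STy Q},
      HasTy S γ₁ Γ e₁ .unit → HasTy S γ₂ Γ e₂ τ → vle S γ (vadd S γ₁ γ₂) →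
      HasTy S γ Γ (.seq e₁ e₂) τ
  | pair : ∀ {γ γ₁ γ₂ : List Q} {Γ : List (STy Q)} {e₁ e₂ : STm Q} {τ₁ τ₂ : STy Q},
      HasTy S γ₁ Γ e₁ τ₁ → HasTy S γ₂ Γ e₂ τ₂ → vle S γ (vadd S γ₁ γ₂) →
      HasTy S γ Γ (.pair e₁ e₂) (.tensor τ₁ τ₂)
  | split : ∀ {γ γ₁ γ₂ : List Q} {Γ : List (STy Q)} {q : Q} {e₁ e₂ : STm Q}
      {τ₁ τ₂ τ : STy Q},
      HasTy S γ₁ Γ e₁ (.tensor τ₁ τ₂) → HasTy S (q :: q :: γ₂) (τ₂ :: τ₁ :: Γ) e₂ τ →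
      vle S γ (vadd S (vscale S q γ₁) γ₂) → HasTy S γ Γ (.split q e₁ e₂) τ
  | inl : ∀ {γ : List Q} {Γ : List (STy Q)} {e : STm Q} {τ₁ τ₂ : STy Q},
      HasTy S γ Γ e τ₁ → HasTy S γ Γ (.inl e) (.sum τ₁ τ₂)
  | inr : ∀ {γ : List Q} {Γ : List (STy Q)} {e : STm Q} {τ₁ τ₂ : STy Q},
      HasTy S γ Γ e τ₂ → HasTy S γ Γ (.inr e) (.sum τ₁ τ₂)
  | case : ∀ {γ γ₁ γ₂ : List Q} {Γ : List (STy Q)} {q : Q} {e e₁ e₂ : STm Q}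
      {τ₁ τ₂ τ : STy Q},
      HasTy S γ₁ Γ e (.sum τ₁ τ₂) → HasTy S (q :: γ₂) (τ₁ :: Γ) e₁ τ →
      HasTy S (q :: γ₂) (τ₂ :: Γ) e₂ τ → S.le q S.one →
      vle S γ (vadd S (vscale S q γ₁) γ₂) → HasTy S γ Γ (.case q e e₁ e₂) τ
  | box : ∀ {γ γ₁ : List Q} {Γ : List (STy Q)} {q : Q} {e : STm Q} {τ : STy Q},
      HasTy S γ₁ Γ e τ → vle S γ (vscale S q γ₁) → HasTy S γ Γ (.box q e) (.box q τ)
  | unbox : ∀ {γ γ₁ γ₂ : List Q} {Γ : List (STy Q)} {q₁ q₂ : Q} {e₁ e₂ : STm Q}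
      {τ τ' : STy Q},
      HasTy S γ₁ Γ e₁ (.box q₁ τ) → HasTy S (S.mul q₁ q₂ :: γ₂) (τ :: Γ) e₂ τ' →
      vle S γ (vadd S (vscale S q₂ γ₁) γ₂) → HasTy S γ Γ (.unbox q₂ e₁ e₂) τ'

end LamCo

open CBPVCo LamCo

/-- CBV translation of graded source types into CBPV value types;
the graded modal type is translated as `⟦□_q τ⟧v = U (F_q ⟦τ⟧v)`. -/
def tyTransV {Q : Type} (S : CoSig Q) : STy Q → VTy Q
  | .unit => .unit
  | .arr τ₁ q τ₂ => .thunk (.arr (tyTransV S τ₁) q (.F S.one (tyTransV S τ₂)))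
  | .tensor τ₁ τ₂ => .prod (tyTransV S τ₁) (tyTransV S τ₂)
  | .sum τ₁ τ₂ => .sum (tyTransV S τ₁) (tyTransV S τ₂)
  | .box q τ => .thunk (.F q (tyTransV S τ))

/-- The graded analogue of Levy's CBV translation of source terms into CBPV
computations, extended with the graded modal operations `box` and `unbox`. -/
def tmTransV {Q : Type} (S : CoSig Q) : STm Q → Comp Q
  | .var x => .ret S.one (.var x)
  | .lam q e => .ret S.one (.thunk (.lam q (tmTransV S e)))
  | .app q e₁ e₂ =>
      .letin S.one (tmTransV S e₁)
        (.letin q (shift (tmTransV S e₂)) (.app (.force (.var 1)) (.var 0)))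
  | .unit => .ret S.one .unit
  | .seq e₁ e₂ => .letin S.one (tmTransV S e₁) (.seq (.var 0) (shift (tmTransV S e₂)))
  | .pair e₁ e₂ =>
      .letin S.one (tmTransV S e₁)
        (.letin S.one (shift (tmTransV S e₂)) (.ret S.one (.pair (.var 1) (.var 0))))
  | .split q e₁ e₂ =>
      .letin q (tmTransV S e₁) (.split q (.var 0) (shift2 (tmTransV S e₂)))
  | .inl e => .letin S.one (tmTransV S e) (.ret S.one (.inl (.var 0)))
  | .inr e => .letin S.one (tmTransV S e) (.ret S.one (.inr (.var 0)))
  | .case q e e₁ e₂ =>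
      .letin q (tmTransV S e)
        (.case q (.var 0) (shift1 (tmTransV S e₁)) (shift1 (tmTransV S e₂)))
  | .box q e => .ret S.one (.thunk (.letin q (tmTransV S e) (.ret q (.var 0))))
  | .unbox q₂ e₁ e₂ =>
      .letin q₂ (tmTransV S e₁) (.letin q₂ (.force (.var 0)) (shift1 (tmTransV S e₂)))

/-!
By induction on the source derivation: each typing rule of the source is matched by a derived rule
of CBPV for the computation that the translation produces, with the same constraint on grades.
In such a computation `x ←^q M in N`, the term former applied to `x` uses it exactly `q` times, so
its grade vector is `q` times a basis vector, and the remaining source subterms are weakened past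
`x`. Weakening by a variable of grade `0` preserves typing, so all grade computations reduce to
`(q, 0) + (0, γ) = (q, γ)`.
-/

namespace CBPVCo

theorem zipWith_insertIdx {α β δ : Type*} (f : α → β → δ) (n : ℕ) (a : α) (b : β)
    (l : List α) (m : List β) :
    List.zipWith f (l.insertIdx n a) (m.insertIdx n b) =
      (List.zipWith f l m).insertIdx n (f a b) := by
  induction n generalizing l m with
  | zero => simp
  | succ n ih => cases l <;> cases m <;> simp [ih]

theorem forall₂_insertIdx {α β : Type*} {R : α → β → Prop} {a : α} {b : β} (hab : R a b) (n : ℕ)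
    {l : List α} {m : List β} (h : List.Forall₂ R l m) :
    List.Forall₂ R (l.insertIdx n a) (m.insertIdx n b) := by
  induction n generalizing l m with
  | zero => exact .cons hab h
  | succ n ih =>
    cases h with
    | nil => exact .nil
    | cons head tail => exact .cons head (ih tail)

/-- The renaming that makes room for a new variable with de Bruijn index `n`. It is defined by
recursion on `n`, so that going under a binder is definitionally `insertRen (n + 1)`. -/
def insertRen : ℕ → ℕ → ℕ
  | 0 => Nat.succ
  | n + 1 => liftRen (insertRen n)

theorem eq_or_exists_insertRen_eq (n i : ℕ) : i = n ∨ ∃ x, insertRen n x = i := by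
  induction n generalizing i with
  | zero =>
    cases i with
    | zero => exact .inl rfl
    | succ i => exact .inr ⟨i, rfl⟩
  | succ n ih =>
    cases i with
    | zero => exact .inr ⟨0, rfl⟩
    | succ i =>
      obtain rfl | ⟨x, rfl⟩ := ih i
      · exact .inl rfl
      · exact .inr ⟨x + 1, rfl⟩

theorem getElem?_insertIdx_insertRen {α : Type*} (a : α) (n : ℕ) (l : List α) (x : ℕ) :
    (l.insertIdx n a)[insertRen n x]? = l[x]? := by
  induction n generalizing l x with
  | zero => simp [insertRen]
  | succ n ih => cases l <;> cases x <;> simp [insertRen, liftRen, ih]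

theorem length_insertIdx_congr {α β : Type*} {l : List α} {m : List β}
    (h : l.length = m.length) (n : ℕ) (a : α) (b : β) :
    (l.insertIdx n a).length = (m.insertIdx n b).length := by
  simp only [List.length_insertIdx, h]

section GradeVectors

variable {Q : Type} (S : CoSig Q)

/-- The zero grade vector of length `n`: the grades of a context none of whose variables is used. -/
def zeros (n : ℕ) : List Q := List.replicate n S.zero

theorem length_zeros (n : ℕ) : (zeros S n).length = n :=
  List.length_replicate

theorem leZero_zeros (n : ℕ) : leZero S (zeros S n) := fun _ hq =>
  List.eq_of_mem_replicate hq ▸ S.le_refl _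

theorem vle_refl (γ : List Q) : vle S γ γ :=
  List.forall₂_same.2 fun q _ => S.le_refl q

theorem vle_of_eq {γ δ : List Q} (h : γ = δ) : vle S γ δ :=
  h ▸ vle_refl S γ

theorem vadd_comm (γ δ : List Q) : vadd S γ δ = vadd S δ γ :=
  List.zipWith_comm_of_comm S.add_comm

theorem vadd_zeros (γ : List Q) : vadd S γ (zeros S γ.length) = γ := by
  induction γ with
  | nil => rfl
  | cons q γ ih => exact congrArg₂ List.cons (S.add_zero q) ih

theorem length_vscale (q : Q) (γ : List Q) : (vscale S q γ).length = γ.length :=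
  List.length_map _

theorem vscale_one (γ : List Q) : vscale S S.one γ = γ :=
  (List.map_congr_left fun q _ => S.one_mul q).trans (List.map_id' γ)

theorem vscale_cons_zero (q : Q) (γ : List Q) :
    vscale S q (S.zero :: γ) = S.zero :: vscale S q γ :=
  congrArg (· :: vscale S q γ) (S.mul_zero q)

theorem vscale_one_cons_zeros (q : Q) (n : ℕ) :
    vscale S q (S.one :: zeros S n) = q :: zeros S n := by
  simp only [vscale, zeros, List.map_cons, List.map_replicate, S.mul_one, S.mul_zero]

theorem vadd_zero_cons_cons_zeros (q : Q) (γ : List Q) :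
    vadd S (S.zero :: γ) (q :: zeros S γ.length) = q :: γ :=
  congrArg₂ List.cons ((S.add_comm _ _).trans (S.add_zero q)) (vadd_zeros S γ)

theorem vadd_vscale_one_cons_zeros_zero_cons (q : Q) (γ : List Q) :
    vadd S (vscale S q (S.one :: zeros S γ.length)) (S.zero :: γ) = q :: γ := by
  rw [vscale_one_cons_zeros, vadd_comm, vadd_zero_cons_cons_zeros]

theorem vscale_insertIdx_zero (q : Q) (n : ℕ) (γ : List Q) :
    vscale S q (γ.insertIdx n S.zero) = (vscale S q γ).insertIdx n S.zero := by
  rw [vscale, List.map_insertIdx, S.mul_zero, vscale]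

variable {S} {γ δ γ₁ γ₂ : List Q} {q : Q}

theorem vle_insertIdx_zero (n : ℕ) (h : vle S γ δ) :
    vle S (γ.insertIdx n S.zero) (δ.insertIdx n S.zero) :=
  forall₂_insertIdx (S.le_refl _) n h

theorem vle_vadd_insertIdx_zero (n : ℕ) (h : vle S γ (vadd S γ₁ γ₂)) :
    vle S (γ.insertIdx n S.zero) (vadd S (γ₁.insertIdx n S.zero) (γ₂.insertIdx n S.zero)) := by
  rw [vadd, zipWith_insertIdx, S.add_zero]
  exact vle_insertIdx_zero n h

theorem vle_vscale_insertIdx_zero (n : ℕ) (h : vle S γ (vscale S q γ₁)) :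
    vle S (γ.insertIdx n S.zero) (vscale S q (γ₁.insertIdx n S.zero)) := by
  rw [vscale_insertIdx_zero]
  exact vle_insertIdx_zero n h

theorem vle_vadd_vscale_insertIdx_zero (n : ℕ) (h : vle S γ (vadd S γ₁ (vscale S q γ₂))) :
    vle S (γ.insertIdx n S.zero)
      (vadd S (γ₁.insertIdx n S.zero) (vscale S q (γ₂.insertIdx n S.zero))) := by
  rw [vscale_insertIdx_zero]
  exact vle_vadd_insertIdx_zero n h

theorem vle_vscale_vadd_insertIdx_zero (n : ℕ) (h : vle S γ (vadd S (vscale S q γ₁) γ₂)) :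
    vle S (γ.insertIdx n S.zero)
      (vadd S (vscale S q (γ₁.insertIdx n S.zero)) (γ₂.insertIdx n S.zero)) := by
  rw [vscale_insertIdx_zero]
  exact vle_vadd_insertIdx_zero n h

theorem leZero_insertIdx_zero (n : ℕ) (h : leZero S γ) :
    leZero S (γ.insertIdx n S.zero) := by
  intro q hq
  obtain rfl | hq := List.eq_or_mem_of_mem_insertIdx hq
  · exact S.le_refl _
  · exact h q hq

theorem length_eq_of_vle_vscale {k : ℕ} (h : vle S γ (vscale S q γ₁))
    (h₁ : γ₁.length = k) : γ.length = k := by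
  rw [List.Forall₂.length_eq h, length_vscale, h₁]

theorem length_eq_of_vle_vadd {k : ℕ} (h : vle S γ (vadd S γ₁ γ₂))
    (h₁ : γ₁.length = k) (h₂ : γ₂.length = k) : γ.length = k := by
  rw [List.Forall₂.length_eq h, vadd, List.length_zipWith, h₁, h₂, min_self]

end GradeVectors

variable {Q : Type} {S : CoSig Q}

mutual

theorem VHasTy.length_eq {γ : List Q} {Γ : List (VTy Q)} {V : Val Q} {A : VTy Q} :
    VHasTy S γ Γ V A → γ.length = Γ.length
  | .var hlen _ _ _ _ => hlen
  | .unit hlen _ => hlen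
  | .thunk hM => hM.length_eq
  | .pair h₁ h₂ hγ => length_eq_of_vle_vadd hγ h₁.length_eq h₂.length_eq
  | .inl hV => hV.length_eq
  | .inr hV => hV.length_eq

theorem CHasTy.length_eq {γ : List Q} {Γ : List (VTy Q)} {M : Comp Q} {B : CTy Q} :
    CHasTy S γ Γ M B → γ.length = Γ.length
  | .lam hM => Nat.succ.inj hM.length_eq
  | .app hM hV hγ =>
    length_eq_of_vle_vadd hγ hM.length_eq ((length_vscale S _ _).trans hV.length_eq)
  | .force hV => hV.length_eq
  | .ret hV hγ => length_eq_of_vle_vscale hγ hV.length_eq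
  | .letin hM hN hγ =>
    length_eq_of_vle_vadd hγ ((length_vscale S _ _).trans hM.length_eq)
      (Nat.succ.inj hN.length_eq)
  | .split hV hN hγ =>
    length_eq_of_vle_vadd hγ ((length_vscale S _ _).trans hV.length_eq)
      (Nat.succ.inj (Nat.succ.inj hN.length_eq))
  | .cpair hM _ => hM.length_eq
  | .fst hM => hM.length_eq
  | .snd hM => hM.length_eq
  | .seq hV hM hγ => length_eq_of_vle_vadd hγ hV.length_eq hM.length_eq
  | .case hV hM _ _ hγ =>
    length_eq_of_vle_vadd hγ ((length_vscale S _ _).trans hV.length_eq)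
      (Nat.succ.inj hM.length_eq)

end

theorem VHasTy.var_insertRen {γ : List Q} {Γ : List (VTy Q)} {x : ℕ} {A : VTy Q}
    (n : ℕ) (A₀ : VTy Q) (h : VHasTy S γ Γ (.var x) A) :
    VHasTy S (γ.insertIdx n S.zero) (Γ.insertIdx n A₀) (.var (insertRen n x)) A := by
  cases h with
  | var hlen hA hq hq_le_one hne_le_zero =>
    refine .var (length_insertIdx_congr hlen n _ _)
      (by rwa [getElem?_insertIdx_insertRen]) (by rwa [getElem?_insertIdx_insertRen])
      hq_le_one fun i q' hi hq' => ?_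
    obtain rfl | ⟨y, rfl⟩ := eq_or_exists_insertRen_eq n i
    · rw [List.getElem?_insertIdx_self, Option.ite_none_right_eq_some] at hq'
      obtain ⟨-, ⟨⟩⟩ := hq'
      exact S.le_refl _
    · rw [getElem?_insertIdx_insertRen] at hq'
      exact hne_le_zero y q' (fun hy => hi (congrArg _ hy)) hq'

mutual

theorem VHasTy.weaken {γ : List Q} {Γ : List (VTy Q)} {V : Val Q} {A : VTy Q}
    (n : ℕ) (A₀ : VTy Q) : VHasTy S γ Γ V A →
      VHasTy S (γ.insertIdx n S.zero) (Γ.insertIdx n A₀) (V.rename (insertRen n)) A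
  | .var hlen hA hq hq_le_one hne_le_zero =>
    VHasTy.var_insertRen n A₀ (.var hlen hA hq hq_le_one hne_le_zero)
  | .unit hlen hγ => .unit (length_insertIdx_congr hlen n _ _) (leZero_insertIdx_zero n hγ)
  | .thunk hM => .thunk (hM.weaken n A₀)
  | .pair h₁ h₂ hγ =>
    .pair (h₁.weaken n A₀) (h₂.weaken n A₀) (vle_vadd_insertIdx_zero n hγ)
  | .inl hV => .inl (hV.weaken n A₀)
  | .inr hV => .inr (hV.weaken n A₀)

theorem CHasTy.weaken {γ : List Q} {Γ : List (VTy Q)} {M : Comp Q} {B : CTy Q}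
    (n : ℕ) (A₀ : VTy Q) : CHasTy S γ Γ M B →
      CHasTy S (γ.insertIdx n S.zero) (Γ.insertIdx n A₀) (M.rename (insertRen n)) B
  | .lam hM => .lam (hM.weaken (n + 1) A₀)
  | .app hM hV hγ =>
    .app (hM.weaken n A₀) (hV.weaken n A₀) (vle_vadd_vscale_insertIdx_zero n hγ)
  | .force hV => .force (hV.weaken n A₀)
  | .ret hV hγ => .ret (hV.weaken n A₀) (vle_vscale_insertIdx_zero n hγ)
  | .letin hM hN hγ =>
    .letin (hM.weaken n A₀) (hN.weaken (n + 1) A₀) (vle_vscale_vadd_insertIdx_zero n hγ)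
  | .split hV hN hγ =>
    .split (hV.weaken n A₀) (hN.weaken (n + 2) A₀) (vle_vscale_vadd_insertIdx_zero n hγ)
  | .cpair h₁ h₂ => .cpair (h₁.weaken n A₀) (h₂.weaken n A₀)
  | .fst hM => .fst (hM.weaken n A₀)
  | .snd hM => .snd (hM.weaken n A₀)
  | .seq hV hM hγ =>
    .seq (hV.weaken n A₀) (hM.weaken n A₀) (vle_vadd_insertIdx_zero n hγ)
  | .case hV h₁ h₂ hq hγ =>
    .case (hV.weaken n A₀) (h₁.weaken (n + 1) A₀) (h₂.weaken (n + 1) A₀) hq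
      (vle_vscale_vadd_insertIdx_zero n hγ)

end

variable {γ γ₁ γ₂ : List Q} {Γ : List (VTy Q)} {M N : Comp Q} {A A₁ A₂ : VTy Q} {B : CTy Q}
  {q q₁ q₂ : Q}

theorem CHasTy.shift (A₀ : VTy Q) (hM : CHasTy S γ Γ M B) :
    CHasTy S (S.zero :: γ) (A₀ :: Γ) (shift M) B :=
  hM.weaken 0 A₀

theorem CHasTy.shift1 (A₀ : VTy Q) (hM : CHasTy S (q :: γ) (A :: Γ) M B) :
    CHasTy S (q :: S.zero :: γ) (A :: A₀ :: Γ) (shift1 M) B :=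
  hM.weaken 1 A₀

theorem CHasTy.shift2 (A₀ : VTy Q) (hM : CHasTy S (q₂ :: q₁ :: γ) (A₂ :: A₁ :: Γ) M B) :
    CHasTy S (q₂ :: q₁ :: S.zero :: γ) (A₂ :: A₁ :: A₀ :: Γ) (shift2 M) B :=
  hM.weaken 2 A₀

theorem VHasTy.var_zero (Γ : List (VTy Q)) (A : VTy Q) :
    VHasTy S (S.one :: zeros S Γ.length) (A :: Γ) (.var 0) A := by
  refine .var (congrArg Nat.succ (length_zeros S _)) rfl rfl (S.le_refl _) fun i q hi hq => ?_
  cases i with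
  | zero => exact absurd rfl hi
  | succ i => exact leZero_zeros S _ q (List.mem_of_getElem? hq)

theorem VHasTy.var_one (Γ : List (VTy Q)) (A₁ A₂ : VTy Q) :
    VHasTy S (S.zero :: S.one :: zeros S Γ.length) (A₂ :: A₁ :: Γ) (.var 1) A₁ :=
  (VHasTy.var_zero Γ A₁).weaken 0 A₂

theorem CHasTy.ret_one {V : Val Q} (hV : VHasTy S γ Γ V A) :
    CHasTy S γ Γ (.ret S.one V) (.F S.one A) :=
  .ret hV (vle_of_eq S (vscale_one S γ).symm)

theorem CHasTy.letin_F_one (hM : CHasTy S γ₁ Γ M (.F S.one A))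
    (hN : CHasTy S (q :: γ₂) (A :: Γ) N B) (hγ : vle S γ (vadd S (vscale S q γ₁) γ₂)) :
    CHasTy S γ Γ (.letin q M N) B :=
  .letin hM (by rwa [S.one_mul]) hγ

theorem CHasTy.letin_F_one_zeros (hM : CHasTy S γ₁ Γ M (.F S.one A))
    (hN : CHasTy S (q :: zeros S Γ.length) (A :: Γ) N B) (hγ : vle S γ (vscale S q γ₁)) :
    CHasTy S γ Γ (.letin q M N) B := by
  refine hM.letin_F_one hN ?_
  rwa [← hM.length_eq, ← length_vscale S q γ₁, vadd_zeros]

theorem CHasTy.letin_letin_shift {K : Comp Q} (hM : CHasTy S γ₁ Γ M (.F S.one A₁))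
    (hN : CHasTy S γ₂ Γ N (.F S.one A₂))
    (hK : CHasTy S (q₂ :: q₁ :: zeros S Γ.length) (A₂ :: A₁ :: Γ) K B)
    (hγ : vle S γ (vadd S (vscale S q₁ γ₁) (vscale S q₂ γ₂))) :
    CHasTy S γ Γ (.letin q₁ M (.letin q₂ (CBPVCo.shift N) K)) B := by
  refine hM.letin_F_one ((hN.shift A₁).letin_F_one hK (vle_of_eq S ?_)) hγ
  rw [vscale_cons_zero, ← hN.length_eq, ← length_vscale S q₂ γ₂, vadd_zero_cons_cons_zeros]

theorem CHasTy.letin_letin_app (hM : CHasTy S γ₁ Γ M (.F S.one (.thunk (.arr A q B))))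
    (hN : CHasTy S γ₂ Γ N (.F S.one A)) (hγ : vle S γ (vadd S γ₁ (vscale S q γ₂))) :
    CHasTy S γ Γ
      (.letin S.one M (.letin q (CBPVCo.shift N) (.app (.force (.var 1)) (.var 0)))) B := by
  refine hM.letin_letin_shift hN ?_ (by rwa [vscale_one])
  refine .app (.force (VHasTy.var_one Γ _ A)) (VHasTy.var_zero (_ :: Γ) A) (vle_of_eq S ?_)
  rw [vscale_one_cons_zeros]
  simpa only [List.length_cons, length_zeros] using
    (vadd_zero_cons_cons_zeros S q (S.one :: zeros S Γ.length)).symm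

theorem CHasTy.letin_letin_pair (hM : CHasTy S γ₁ Γ M (.F S.one A₁))
    (hN : CHasTy S γ₂ Γ N (.F S.one A₂)) (hγ : vle S γ (vadd S γ₁ γ₂)) :
    CHasTy S γ Γ
      (.letin S.one M (.letin S.one (CBPVCo.shift N) (.ret S.one (.pair (.var 1) (.var 0)))))
      (.F S.one (.prod A₁ A₂)) := by
  refine hM.letin_letin_shift hN ?_ (by rwa [vscale_one, vscale_one])
  refine .ret_one (.pair (VHasTy.var_one Γ A₁ A₂) (VHasTy.var_zero (A₁ :: Γ) A₂) (vle_of_eq S ?_))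
  simpa only [List.length_cons, length_zeros] using
    (vadd_zero_cons_cons_zeros S S.one (S.one :: zeros S Γ.length)).symm

theorem CHasTy.letin_inl (hM : CHasTy S γ Γ M (.F S.one A₁)) :
    CHasTy S γ Γ (.letin S.one M (.ret S.one (.inl (.var 0)))) (.F S.one (.sum A₁ A₂)) :=
  hM.letin_F_one_zeros (.ret_one (.inl (VHasTy.var_zero Γ A₁)))
    (vle_of_eq S (vscale_one S γ).symm)

theorem CHasTy.letin_inr (hM : CHasTy S γ Γ M (.F S.one A₂)) :
    CHasTy S γ Γ (.letin S.one M (.ret S.one (.inr (.var 0)))) (.F S.one (.sum A₁ A₂)) :=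
  hM.letin_F_one_zeros (.ret_one (.inr (VHasTy.var_zero Γ A₂)))
    (vle_of_eq S (vscale_one S γ).symm)

theorem CHasTy.letin_ret (hM : CHasTy S γ₁ Γ M (.F S.one A)) (hγ : vle S γ (vscale S q γ₁)) :
    CHasTy S γ Γ (.letin q M (.ret q (.var 0))) (.F q A) :=
  hM.letin_F_one_zeros
    (.ret (VHasTy.var_zero Γ A) (vle_of_eq S (vscale_one_cons_zeros S q _).symm)) hγ

theorem CHasTy.letin_seq (hM : CHasTy S γ₁ Γ M (.F S.one .unit)) (hN : CHasTy S γ₂ Γ N B)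
    (hγ : vle S γ (vadd S γ₁ γ₂)) :
    CHasTy S γ Γ (.letin S.one M (.seq (.var 0) (CBPVCo.shift N))) B := by
  refine hM.letin_F_one ?_ (by rwa [vscale_one])
  refine .seq (VHasTy.var_zero Γ .unit) (hN.shift .unit) (vle_of_eq S ?_)
  rw [← hN.length_eq, vadd_comm, vadd_zero_cons_cons_zeros]

theorem CHasTy.letin_split (hM : CHasTy S γ₁ Γ M (.F S.one (.prod A₁ A₂)))
    (hN : CHasTy S (q :: q :: γ₂) (A₂ :: A₁ :: Γ) N B)
    (hγ : vle S γ (vadd S (vscale S q γ₁) γ₂)) :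
    CHasTy S γ Γ (.letin q M (.split q (.var 0) (CBPVCo.shift2 N))) B := by
  have hlen : γ₂.length = Γ.length := Nat.succ.inj (Nat.succ.inj hN.length_eq)
  refine hM.letin_F_one ?_ hγ
  refine .split (VHasTy.var_zero Γ (.prod A₁ A₂)) (hN.shift2 _) (vle_of_eq S ?_)
  rw [← hlen, vadd_vscale_one_cons_zeros_zero_cons]

theorem CHasTy.letin_case {N₁ N₂ : Comp Q} (hM : CHasTy S γ₁ Γ M (.F S.one (.sum A₁ A₂)))
    (hN₁ : CHasTy S (q :: γ₂) (A₁ :: Γ) N₁ B) (hN₂ : CHasTy S (q :: γ₂) (A₂ :: Γ) N₂ B)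
    (hq : S.le q S.one) (hγ : vle S γ (vadd S (vscale S q γ₁) γ₂)) :
    CHasTy S γ Γ (.letin q M (.case q (.var 0) (CBPVCo.shift1 N₁) (CBPVCo.shift1 N₂))) B := by
  have hlen : γ₂.length = Γ.length := Nat.succ.inj hN₁.length_eq
  refine hM.letin_F_one ?_ hγ
  refine .case (VHasTy.var_zero Γ (.sum A₁ A₂)) (hN₁.shift1 _) (hN₂.shift1 _) hq (vle_of_eq S ?_)
  rw [← hlen, vadd_vscale_one_cons_zeros_zero_cons]

theorem CHasTy.letin_letin_force (hM : CHasTy S γ₁ Γ M (.F S.one (.thunk (.F q₁ A))))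
    (hN : CHasTy S (S.mul q₁ q₂ :: γ₂) (A :: Γ) N B)
    (hγ : vle S γ (vadd S (vscale S q₂ γ₁) γ₂)) :
    CHasTy S γ Γ (.letin q₂ M (.letin q₂ (.force (.var 0)) (CBPVCo.shift1 N))) B := by
  have hlen : γ₂.length = Γ.length := Nat.succ.inj hN.length_eq
  refine hM.letin_F_one ?_ hγ
  refine .letin (.force (VHasTy.var_zero Γ (.thunk (.F q₁ A)))) (hN.shift1 _) (vle_of_eq S ?_)
  rw [← hlen, vadd_vscale_one_cons_zeros_zero_cons]

end CBPVCo

/-- Type-and-coeffect preservation of the CBV translation of the graded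
λ-calculus: if `γ·Γ ⊢ e : τ` in the graded source λ-calculus, then
`γ·⟦Γ⟧v ⊢ ⟦e⟧v : F_1 ⟦τ⟧v` in CBPV with coeffects, with the same grade vector `γ`. -/
theorem cbv_graded_translation_preservation {Q : Type} (S : CoSig Q)
    {γ : List Q} {Γ : List (STy Q)} {e : STm Q} {τ : STy Q}
    (h : LamCo.HasTy S γ Γ e τ) :
    CHasTy S γ (Γ.map (tyTransV S)) (tmTransV S e) (.F S.one (tyTransV S τ)) := by
  induction h with
  | var hlen hτ hq hq_le_one hne_le_zero =>
    exact .ret_one (.var (by rwa [List.length_map]) (by rw [List.getElem?_map, hτ]; rfl)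
      hq hq_le_one hne_le_zero)
  | lam _ ih => exact .ret_one (.thunk (.lam ih))
  | app _ _ hγ ih₁ ih₂ => exact ih₁.letin_letin_app ih₂ hγ
  | unit hlen hγ => exact .ret_one (.unit (by rwa [List.length_map]) hγ)
  | seq _ _ hγ ih₁ ih₂ => exact ih₁.letin_seq ih₂ hγ
  | pair _ _ hγ ih₁ ih₂ => exact ih₁.letin_letin_pair ih₂ hγ
  | split _ _ hγ ih₁ ih₂ => exact ih₁.letin_split ih₂ hγ
  | inl _ ih => exact ih.letin_inl
  | inr _ ih => exact ih.letin_inr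
  | case _ _ _ hq hγ ih ih₁ ih₂ => exact ih.letin_case ih₁ ih₂ hq hγ
  | box _ hγ ih => exact .ret_one (.thunk (ih.letin_ret hγ))
  | unbox _ _ hγ ih₁ ih₂ => exact ih₁.letin_letin_force ih₂ hγ
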